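/- Let p ≥ 1 and let y(k) = C A^k x0 be the nominal output from an arbitrary initial state x0 ∈ ℝ^n. Define the heuristic window size N(T) = ⌊(T+1)/(p+1)⌋. If T̄ satisfies T̄ + 1 ≥ ν(p+1) and p(T̄ + 1) ≥ μ(p+1) (equivalently T̄ ≥ max{ν(p+1) − 1, μ(p+1)/p − 1}), then Rank(Y_{N(T̄),T̄}) = Γ({y(k)}), where ν and μ are the observability and excitability indices. -/

import Mathlib

open Matrix

noncomputable section

/-- The observability matrix `O_N = [C; CA; …; CA^{N-1}]`, with block rows indexed by `Fin N`. -/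
def obsMat {n p : ℕ} (A : Matrix (Fin n) (Fin n) ℝ) (C : Matrix (Fin p) (Fin n) ℝ)
    (N : ℕ) : Matrix (Fin N × Fin p) (Fin n) ℝ :=
  fun ir j => (C * A ^ (ir.1 : ℕ)) ir.2 j

/-- The observability index `ν = min {N : Rank O_N = Rank O_{N+j} for all j}`. -/
def obsIndex {n p : ℕ} (A : Matrix (Fin n) (Fin n) ℝ) (C : Matrix (Fin p) (Fin n) ℝ) : ℕ :=
  sInf {N : ℕ | ∀ j : ℕ, (obsMat A C (N + j)).rank = (obsMat A C N).rank}

/-- The Krylov/excitability matrix `E_N(x) = [x, Ax, …, A^{N-1} x]`. -/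
def excMat {n : ℕ} (A : Matrix (Fin n) (Fin n) ℝ) (x : Fin n → ℝ) (N : ℕ) :
    Matrix (Fin n) (Fin N) ℝ :=
  fun i k => (A ^ (k : ℕ)).mulVec x i

/-- The excitability index at `x`: `μ(x) = min {i : Rank E_i(x) = Rank E_{i+j}(x) for all j}`. -/
def excIndexAt {n : ℕ} (A : Matrix (Fin n) (Fin n) ℝ) (x : Fin n → ℝ) : ℕ :=
  sInf {i : ℕ | ∀ j : ℕ, (excMat A x (i + j)).rank = (excMat A x i).rank}

/-- The excitability index `μ = max_{x ∈ ℝⁿ} μ(x)`. -/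
def excIndex {n : ℕ} (A : Matrix (Fin n) (Fin n) ℝ) : ℕ :=
  sSup (Set.range (excIndexAt A))

/-- The Hankel matrix `Y_{N,T}` of the nominal output `y(k) = C A^k x0`; its `j`-th column is
the stacked vector `(y(j), …, y(j+N-1))`. -/
def hankelMat {n p : ℕ} (A : Matrix (Fin n) (Fin n) ℝ) (C : Matrix (Fin p) (Fin n) ℝ)
    (x0 : Fin n → ℝ) (N T : ℕ) : Matrix (Fin N × Fin p) (Fin (T - N + 1)) ℝ :=
  fun ir j => (C * A ^ ((j : ℕ) + (ir.1 : ℕ))).mulVec x0 ir.2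

/-- The Hankel information `Γ({y(k)}) = sup {Rank Y_{N,T} : N ≤ T}`. -/
def hankelInfo {n p : ℕ} (A : Matrix (Fin n) (Fin n) ℝ) (C : Matrix (Fin p) (Fin n) ℝ)
    (x0 : Fin n → ℝ) : ℕ :=
  sSup {r : ℕ | ∃ N T : ℕ, N ≤ T ∧ r = (hankelMat A C x0 N T).rank}

theorem aux_nonempty {V : Type*} [AddCommGroup V] [Module ℝ V] [FiniteDimensional ℝ V]
    (S : ℕ → Submodule ℝ V) (hS : Monotone S) (n : ℕ) (h : ∀ K, S K ≤ S n) (j : ℕ) :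
    Module.finrank ℝ (S (n + j)) = Module.finrank ℝ (S n) := by
  rw [le_antisymm (h (n + j)) (hS (Nat.le_add_right n j))]

theorem aux_stab {V : Type*} [AddCommGroup V] [Module ℝ V] [FiniteDimensional ℝ V]
    (S : ℕ → Submodule ℝ V) (hS : Monotone S) (r : ℕ → ℕ)
    (hr : ∀ k, r k = Module.finrank ℝ (S k)) (n : ℕ) (h : ∀ K, S K ≤ S n) (N : ℕ)
    (hN : sInf {N : ℕ | ∀ j : ℕ, r (N + j) = r N} ≤ N) (K : ℕ) : S K ≤ S N := by
  have hmem : sInf {N : ℕ | ∀ j : ℕ, r (N + j) = r N} ∈ {N : ℕ | ∀ j : ℕ, r (N + j) = r N} :=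
    Nat.sInf_mem ⟨n, fun j => by rw [hr, hr]; exact aux_nonempty S hS n h j⟩
  set N0 := sInf {N : ℕ | ∀ j : ℕ, r (N + j) = r N}
  have h1 := hmem K
  rw [hr, hr] at h1
  have h2 : S N0 = S (N0 + K) :=
    Submodule.eq_of_le_of_finrank_eq (hS (Nat.le_add_right _ _)) h1.symm
  calc S K ≤ S (N0 + K) := hS (Nat.le_add_left _ _)
    _ = S N0 := h2.symm
    _ ≤ S N := hS hN

theorem pow_comb {n : ℕ} (A : Matrix (Fin n) (Fin n) ℝ) (k : ℕ) :
    ∃ c : Fin n → ℝ, A ^ k = ∑ i : Fin n, c i • A ^ (i : ℕ) := by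
  rcases Nat.eq_zero_or_pos n with h0 | hn
  · subst h0
    exact ⟨0, Subsingleton.elim _ _⟩
  · refine ⟨fun i => (Polynomial.X ^ k %ₘ A.charpoly).coeff i, ?_⟩
    rw [Matrix.pow_eq_aeval_mod_charpoly]
    have hd : (Polynomial.X ^ k %ₘ A.charpoly).natDegree < n := by
      have h1 := Polynomial.natDegree_modByMonic_lt (Polynomial.X ^ k) A.charpoly_monic
        (by
          intro h
          have := A.charpoly_natDegree_eq_dim
          rw [h] at this
          simp at this
          omega)
      rwa [A.charpoly_natDegree_eq_dim, Fintype.card_fin] at h1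
    rw [Polynomial.aeval_eq_sum_range' hd, Finset.sum_range]

def rowSp {n p : ℕ} (A : Matrix (Fin n) (Fin n) ℝ) (C : Matrix (Fin p) (Fin n) ℝ) (N : ℕ) :
    Submodule ℝ (Fin n → ℝ) := Submodule.span ℝ (Set.range (obsMat A C N).row)

def colSp {n : ℕ} (A : Matrix (Fin n) (Fin n) ℝ) (x : Fin n → ℝ) (N : ℕ) :
    Submodule ℝ (Fin n → ℝ) := Submodule.span ℝ (Set.range (excMat A x N).col)

theorem rowSp_mono {n p : ℕ} (A : Matrix (Fin n) (Fin n) ℝ) (C : Matrix (Fin p) (Fin n) ℝ) :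
    Monotone (rowSp A C) := by
  intro a b hab
  apply Submodule.span_mono
  rintro _ ⟨⟨i, r⟩, rfl⟩
  exact ⟨(Fin.castLE hab i, r), rfl⟩

theorem colSp_mono {n : ℕ} (A : Matrix (Fin n) (Fin n) ℝ) (x : Fin n → ℝ) :
    Monotone (colSp A x) := by
  intro a b hab
  apply Submodule.span_mono
  rintro _ ⟨i, rfl⟩
  exact ⟨Fin.castLE hab i, rfl⟩

theorem rowSp_le {n p : ℕ} (A : Matrix (Fin n) (Fin n) ℝ) (C : Matrix (Fin p) (Fin n) ℝ)
    (K : ℕ) : rowSp A C K ≤ rowSp A C n := by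
  apply Submodule.span_le.2
  rintro _ ⟨⟨i, r⟩, rfl⟩
  obtain ⟨c, hc⟩ := pow_comb A i
  have : (obsMat A C K).row (i, r) = ∑ l : Fin n, c l • (obsMat A C n).row (l, r) := by
    ext j
    simp [obsMat, Matrix.row, hc, Matrix.mul_sum, Matrix.sum_apply]
  rw [this]
  exact Submodule.sum_mem _ fun l _ => Submodule.smul_mem _ _ (Submodule.subset_span ⟨(l, r), rfl⟩)

theorem colSp_le {n : ℕ} (A : Matrix (Fin n) (Fin n) ℝ) (x : Fin n → ℝ)
    (K : ℕ) : colSp A x K ≤ colSp A x n := by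
  apply Submodule.span_le.2
  rintro _ ⟨i, rfl⟩
  obtain ⟨c, hc⟩ := pow_comb A i
  have : (excMat A x K).col i = ∑ l : Fin n, c l • (excMat A x n).col l := by
    ext j
    simp [excMat, Matrix.col, hc, Matrix.sum_mulVec, Matrix.smul_mulVec]
  rw [this]
  exact Submodule.sum_mem _ fun l _ => Submodule.smul_mem _ _ (Submodule.subset_span ⟨l, rfl⟩)

theorem row_rank {n p : ℕ} (A : Matrix (Fin n) (Fin n) ℝ) (C : Matrix (Fin p) (Fin n) ℝ)
    (K : ℕ) : (obsMat A C K).rank = Module.finrank ℝ (rowSp A C K) :=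
  Matrix.rank_eq_finrank_span_row _

theorem col_rank {n : ℕ} (A : Matrix (Fin n) (Fin n) ℝ) (x : Fin n → ℝ)
    (K : ℕ) : (excMat A x K).rank = Module.finrank ℝ (colSp A x K) :=
  Matrix.rank_eq_finrank_span_cols _

theorem excIndexAt_le {n : ℕ} (A : Matrix (Fin n) (Fin n) ℝ) (x : Fin n → ℝ) :
    excIndexAt A x ≤ excIndex A := by
  refine le_csSup ⟨n, ?_⟩ ⟨x, rfl⟩
  rintro _ ⟨z, rfl⟩
  refine Nat.sInf_le fun j => ?_
  rw [col_rank, col_rank]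
  exact aux_nonempty _ (colSp_mono A z) n (colSp_le A z) j

theorem obs_factor {n p : ℕ} (A : Matrix (Fin n) (Fin n) ℝ) (C : Matrix (Fin p) (Fin n) ℝ)
    (N : ℕ) (hN : obsIndex A C ≤ N) (K : ℕ) :
    ∃ L : Matrix (Fin K × Fin p) (Fin N × Fin p) ℝ, obsMat A C K = L * obsMat A C N := by
  have h := aux_stab (rowSp A C) (rowSp_mono A C) (fun k => (obsMat A C k).rank)
    (row_rank A C) n (rowSp_le A C) N hN K
  have h2 : ∀ ir, ∃ v, v ᵥ* obsMat A C N = (obsMat A C K).row ir := by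
    intro ir
    have h3 : (obsMat A C K).row ir ∈ rowSp A C N := h (Submodule.subset_span ⟨ir, rfl⟩)
    rw [rowSp, ← _root_.range_vecMulLinear] at h3
    exact h3
  choose L hL using h2
  refine ⟨Matrix.of L, ?_⟩
  ext ir j
  exact (congrFun (hL ir) j).symm

theorem exc_factor {n : ℕ} (A : Matrix (Fin n) (Fin n) ℝ) (x : Fin n → ℝ)
    (N : ℕ) (hN : excIndexAt A x ≤ N) (K : ℕ) :
    ∃ R : Matrix (Fin N) (Fin K) ℝ, excMat A x K = excMat A x N * R := by
  have h := aux_stab (colSp A x) (colSp_mono A x) (fun k => (excMat A x k).rank)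
    (col_rank A x) n (colSp_le A x) N hN K
  have h2 : ∀ k, ∃ v, excMat A x N *ᵥ v = (excMat A x K).col k := by
    intro k
    have h3 : (excMat A x K).col k ∈ colSp A x N := h (Submodule.subset_span ⟨k, rfl⟩)
    rw [colSp, ← Matrix.range_mulVecLin] at h3
    exact h3
  choose L hL using h2
  refine ⟨(Matrix.of L)ᵀ, ?_⟩
  ext i k
  exact (congrFun (hL k) i).symm

theorem hankel_eq {n p : ℕ} (A : Matrix (Fin n) (Fin n) ℝ) (C : Matrix (Fin p) (Fin n) ℝ)
    (x0 : Fin n → ℝ) (N T : ℕ) :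
    hankelMat A C x0 N T = obsMat A C N * excMat A x0 (T - N + 1) := by
  ext ir j
  have : (obsMat A C N * excMat A x0 (T - N + 1)) ir j
      = ((C * A ^ (ir.1 : ℕ)) *ᵥ (A ^ (j : ℕ) *ᵥ x0)) ir.2 := rfl
  rw [this, Matrix.mulVec_mulVec, Matrix.mul_assoc, ← pow_add, add_comm]
  rfl

/-- **Safe time horizon length for the heuristic `N(T) = ⌊(T+1)/(p+1)⌋`.** If
`T̄ + 1 ≥ ν (p+1)` and `p (T̄ + 1) ≥ μ (p+1)`, then `Rank Y_{N(T̄),T̄} = Γ({y(k)})`. -/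
theorem safe_time_horizon_heuristic {n p : ℕ} (hp : 1 ≤ p)
    (A : Matrix (Fin n) (Fin n) ℝ) (C : Matrix (Fin p) (Fin n) ℝ) (x0 : Fin n → ℝ)
    (T : ℕ)
    (hT1 : obsIndex A C * (p + 1) ≤ T + 1)
    (hT2 : excIndex A * (p + 1) ≤ p * (T + 1)) :
    (hankelMat A C x0 ((T + 1) / (p + 1)) T).rank = hankelInfo A C x0 := by
  have hN : obsIndex A C ≤ (T + 1) / (p + 1) := (Nat.le_div_iff_mul_le (by omega)).2 hT1
  have hNT : (T + 1) / (p + 1) ≤ T := by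
    have : (T + 1) / (p + 1) ≤ (T + 1) / 2 := Nat.div_le_div_left (by omega) (by omega)
    omega
  have hdiv : (T + 1) / (p + 1) * (p + 1) ≤ T + 1 := Nat.div_mul_le_self _ _
  generalize (T + 1) / (p + 1) = N at *
  have hM : excIndex A ≤ T - N + 1 := by
    obtain ⟨d, rfl⟩ := Nat.exists_eq_add_of_le hNT
    rw [Nat.add_sub_cancel_left]
    by_contra hlt
    push Not at hlt
    nlinarith [Nat.mul_le_mul_right (p + 1) (Nat.succ_le_of_lt hlt)]
  have key : ∀ r ∈ {r : ℕ | ∃ N T : ℕ, N ≤ T ∧ r = (hankelMat A C x0 N T).rank},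
      r ≤ (hankelMat A C x0 N T).rank := by
    rintro _ ⟨N', T', -, rfl⟩
    obtain ⟨L, hL⟩ := obs_factor A C N hN N'
    obtain ⟨R, hR⟩ := exc_factor A x0 (T - N + 1) ((excIndexAt_le A x0).trans hM) (T' - N' + 1)
    have : hankelMat A C x0 N' T' = L * hankelMat A C x0 N T * R := by
      rw [hankel_eq, hankel_eq, hL, hR]
      simp only [Matrix.mul_assoc]
    rw [this]
    exact (Matrix.rank_mul_le_left _ _).trans (Matrix.rank_mul_le_right _ _)
  exact le_antisymm (le_csSup ⟨_, key⟩ ⟨N, T, hNT, rfl⟩) (csSup_le ⟨_, N, T, hNT, rfl⟩ key)
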